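/- Cocycle (cyclic) identity for the surface-charge central extension: Let ξⱼ = (Yⱼ, Wⱼ, Vⱼ) for j = 1, 2, 3 be triples where Yⱼ, Wⱼ : ℝ → ℝ are smooth 2π-periodic functions and Vⱼ ∈ ℝ. Define the bracket [ξ₁, ξ₂] := (Y₁Y₂′ − Y₂Y₁′, Y₁·(W₂′ + V₂/2) − Y₂·(W₁′ + V₁/2), 0) and the pairing K(ξ₁, ξ₂) := ∫₀^{2π} [ W₁(φ)·Y₂″(φ) − W₂(φ)·Y₁″(φ) − W₁(φ)·W₂′(φ) + (V₁/2)·W₂(φ) − (V₂/2)·W₁(φ) ] dφ. Then K([ξ₁,ξ₂], ξ₃) + K([ξ₂,ξ₃], ξ₁) + K([ξ₃,ξ₁], ξ₂) = 0. -/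

import Mathlib

/-- Real triples `(Y, W, V)` with `Y, W : ℝ → ℝ` and `V ∈ ℝ`. -/
abbrev AsympTripleR : Type := (ℝ → ℝ) × (ℝ → ℝ) × ℝ

/-- The elements of the asymptotic symmetry algebra: both function components
are smooth and `2π`-periodic. -/
def IsAsympEltR (x : AsympTripleR) : Prop :=
  ContDiff ℝ (⊤ : ℕ∞) x.1 ∧ Function.Periodic x.1 (2 * Real.pi) ∧
    ContDiff ℝ (⊤ : ℕ∞) x.2.1 ∧ Function.Periodic x.2.1 (2 * Real.pi)

/-- The bracket
`[(Y₁,W₁,V₁),(Y₂,W₂,V₂)] = (Y₁Y₂′ − Y₂Y₁′, Y₁(W₂′ + V₂/2) − Y₂(W₁′ + V₁/2), 0)`. -/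
noncomputable def asympBracketR (x y : AsympTripleR) : AsympTripleR :=
  (fun t => x.1 t * deriv y.1 t - y.1 t * deriv x.1 t,
   fun t => x.1 t * (deriv y.2.1 t + y.2.2 / 2) - y.1 t * (deriv x.2.1 t + x.2.2 / 2),
   0)

/-- The surface-charge central-extension pairing
`K(ξ₁,ξ₂) = ∫₀^{2π} (W₁ Y₂″ − W₂ Y₁″ − W₁ W₂′ + (V₁/2) W₂ − (V₂/2) W₁) dφ`. -/
noncomputable def Kpair (x y : AsympTripleR) : ℝ :=
  ∫ φ in (0 : ℝ)..(2 * Real.pi),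
    (x.2.1 φ * deriv (deriv y.1) φ - y.2.1 φ * deriv (deriv x.1) φ
      - x.2.1 φ * deriv y.2.1 φ + x.2.2 / 2 * y.2.1 φ - y.2.2 / 2 * x.2.1 φ)

/-!
Write `w₁₂ = Y₁Y₂′ − Y₂Y₁′` and `A = W′ + V/2`. The integrand of `K([ξ₁, ξ₂], ξ₃)` is
`(Y₁A₂ − Y₂A₁)(Y₃″ − A₃) − W₃w₁₂″`. In the cyclic sum the terms quadratic in `A` cancel, and since
`w₁₂′ = Y₁Y₂″ − Y₂Y₁″`, the terms linear in `A` regroup to `−A₃w₁₂′ + cyclic`. What remains,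
`−(A₃w₁₂′ + W₃w₁₂″) + cyclic`, is the derivative of the periodic function
`−(W₃w₁₂′ + (V₃/2)w₁₂) + cyclic`, so its integral over a period vanishes.
-/

theorem periodic_deriv {𝕜 F : Type*} [NontriviallyNormedField 𝕜] [NormedAddCommGroup F]
    [NormedSpace 𝕜 F] {f : 𝕜 → F} {T : 𝕜} (hf : Function.Periodic f T) :
    Function.Periodic (deriv f) T := fun t => by
  rw [← deriv_comp_add_const, hf.funext]

theorem integral_period_eq_zero_of_hasDerivAt {E : Type*} [NormedAddCommGroup E]
    [NormedSpace ℝ E] [CompleteSpace E] {F f : ℝ → E} {T : ℝ}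
    (hF : Function.Periodic F T) (hderiv : ∀ t, HasDerivAt F (f t) t) (hf : Continuous f) (a : ℝ) :
    ∫ t in a..a + T, f t = 0 := by
  rw [intervalIntegral.integral_eq_sub_of_hasDerivAt (fun t _ => hderiv t)
    (hf.intervalIntegrable _ _), hF a, sub_self]

/-- The regularity under which every derivative in the cocycle identity exists classically:
`Y` is `C³` and `W` is `C¹`. -/
structure IsRegularTriple (x : AsympTripleR) : Prop where
  contDiff_fst : ContDiff ℝ 3 x.1
  contDiff_snd : ContDiff ℝ 1 x.2.1

theorem IsRegularTriple.contDiff_two_fst {x : AsympTripleR} (hx : IsRegularTriple x) :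
    ContDiff ℝ 2 x.1 :=
  hx.contDiff_fst.of_le (by norm_num)

/-- Triples whose two function components have period `T`. -/
structure IsPeriodicTriple (x : AsympTripleR) (T : ℝ) : Prop where
  periodic_fst : Function.Periodic x.1 T
  periodic_snd : Function.Periodic x.2.1 T

theorem IsAsympEltR.isRegularTriple {x : AsympTripleR} (hx : IsAsympEltR x) : IsRegularTriple x :=
  ⟨contDiff_infty.1 hx.1 3, mod_cast contDiff_infty.1 hx.2.2.1 1⟩

theorem IsAsympEltR.isPeriodicTriple {x : AsympTripleR} (hx : IsAsympEltR x) :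
    IsPeriodicTriple x (2 * Real.pi) :=
  ⟨hx.2.1, hx.2.2.2⟩

/-- The integrand of `Kpair`. -/
noncomputable def kpairDensity (x y : AsympTripleR) (t : ℝ) : ℝ :=
  x.2.1 t * deriv (deriv y.1) t - y.2.1 t * deriv (deriv x.1) t
    - x.2.1 t * deriv y.2.1 t + x.2.2 / 2 * y.2.1 t - y.2.2 / 2 * x.2.1 t

/-- The function `W′ + V/2`, that is, the derivative of `W + Vφ/2`. The components `W` and `V` enter
the bracket only through it. -/
noncomputable def affineDeriv (x : AsympTripleR) (t : ℝ) : ℝ :=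
  deriv x.2.1 t + x.2.2 / 2

/-- The function `W₃w′ + (V₃/2)w`, where `w` is the first component of `[ξ₁, ξ₂]`. Its cyclic sum
is, up to sign, a primitive of the cyclic sum of the densities of `K([ξ₁, ξ₂], ξ₃)`. -/
noncomputable def cocyclePotential (x y z : AsympTripleR) (t : ℝ) : ℝ :=
  z.2.1 t * deriv (asympBracketR x y).1 t + z.2.2 / 2 * (asympBracketR x y).1 t

section Cocycle

variable {x y z : AsympTripleR}

theorem contDiff_bracket_fst {n : ℕ} (hx : ContDiff ℝ (n + 1) x.1) (hy : ContDiff ℝ (n + 1) y.1) :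
    ContDiff ℝ n (asympBracketR x y).1 :=
  (hx.of_succ.mul hy.deriv').sub (hy.of_succ.mul hx.deriv')

theorem continuous_bracket_snd (hx₁ : Continuous x.1) (hx₂ : ContDiff ℝ 1 x.2.1)
    (hy₁ : Continuous y.1) (hy₂ : ContDiff ℝ 1 y.2.1) :
    Continuous (asympBracketR x y).2.1 := by
  have hWx : Continuous (affineDeriv x) := hx₂.continuous_deriv_one.add continuous_const
  have hWy : Continuous (affineDeriv y) := hy₂.continuous_deriv_one.add continuous_const
  exact (hx₁.mul hWy).sub (hy₁.mul hWx)

theorem deriv_bracket_fst (hx : ContDiff ℝ 2 x.1) (hy : ContDiff ℝ 2 y.1) (t : ℝ) :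
    deriv (asympBracketR x y).1 t
      = x.1 t * deriv (deriv y.1) t - y.1 t * deriv (deriv x.1) t := by
  have hx₀ := (hx.differentiable two_ne_zero t).hasDerivAt
  have hy₀ := (hy.differentiable two_ne_zero t).hasDerivAt
  have hx₁ := (hx.differentiable_deriv_two t).hasDerivAt
  have hy₁ := (hy.differentiable_deriv_two t).hasDerivAt
  refine ((hx₀.mul hy₁).sub (hy₀.mul hx₁)).deriv.trans ?_
  ring

theorem IsPeriodicTriple.bracket_fst {T : ℝ} (hx : IsPeriodicTriple x T)
    (hy : IsPeriodicTriple y T) : Function.Periodic (asympBracketR x y).1 T :=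
  (hx.periodic_fst.mul (periodic_deriv hy.periodic_fst)).sub
    (hy.periodic_fst.mul (periodic_deriv hx.periodic_fst))

theorem kpairDensity_bracket (x y z : AsympTripleR) (t : ℝ) :
    kpairDensity (asympBracketR x y) z t
      = (x.1 t * affineDeriv y t - y.1 t * affineDeriv x t)
          * (deriv (deriv z.1) t - affineDeriv z t)
        - z.2.1 t * deriv (deriv (asympBracketR x y).1) t := by
  simp only [kpairDensity, asympBracketR, affineDeriv]
  ring

theorem continuous_kpairDensity (hx₁ : ContDiff ℝ 2 x.1) (hx₂ : Continuous x.2.1)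
    (hy₁ : ContDiff ℝ 2 y.1) (hy₂ : ContDiff ℝ 1 y.2.1) : Continuous (kpairDensity x y) := by
  have hx₁'' : Continuous (deriv (deriv x.1)) := (hx₁.deriv' (n := 1)).continuous_deriv_one
  have hy₁'' : Continuous (deriv (deriv y.1)) := (hy₁.deriv' (n := 1)).continuous_deriv_one
  have hy₂' : Continuous (deriv y.2.1) := hy₂.continuous_deriv_one
  exact ((((hx₂.mul hy₁'').sub (hy₂.continuous.mul hx₁'')).sub (hx₂.mul hy₂')).add
    (hy₂.continuous.const_mul _)).sub (hx₂.const_mul _)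

theorem continuous_kpairDensity_bracket (hx : IsRegularTriple x) (hy : IsRegularTriple y)
    (hz : IsRegularTriple z) : Continuous (kpairDensity (asympBracketR x y) z) :=
  continuous_kpairDensity (contDiff_bracket_fst (n := 2) hx.contDiff_fst hy.contDiff_fst)
    (continuous_bracket_snd hx.contDiff_fst.continuous hx.contDiff_snd
      hy.contDiff_fst.continuous hy.contDiff_snd)
    hz.contDiff_two_fst hz.contDiff_snd

theorem kpairDensity_bracket_cyclic_sum (hx : ContDiff ℝ 2 x.1) (hy : ContDiff ℝ 2 y.1)
    (hz : ContDiff ℝ 2 z.1) (t : ℝ) :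
    kpairDensity (asympBracketR x y) z t + kpairDensity (asympBracketR y z) x t
        + kpairDensity (asympBracketR z x) y t
      = -((affineDeriv z t * deriv (asympBracketR x y).1 t
            + z.2.1 t * deriv (deriv (asympBracketR x y).1) t)
          + (affineDeriv x t * deriv (asympBracketR y z).1 t
            + x.2.1 t * deriv (deriv (asympBracketR y z).1) t)
          + (affineDeriv y t * deriv (asympBracketR z x).1 t
            + y.2.1 t * deriv (deriv (asympBracketR z x).1) t)) := by
  simp only [kpairDensity_bracket, deriv_bracket_fst hx hy t, deriv_bracket_fst hy hz t,
    deriv_bracket_fst hz hx t]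
  ring

theorem hasDerivAt_cocyclePotential (hx : ContDiff ℝ 3 x.1) (hy : ContDiff ℝ 3 y.1)
    (hz : Differentiable ℝ z.2.1) (t : ℝ) :
    HasDerivAt (cocyclePotential x y z)
      (affineDeriv z t * deriv (asympBracketR x y).1 t
        + z.2.1 t * deriv (deriv (asympBracketR x y).1) t) t := by
  have hw : ContDiff ℝ 2 (asympBracketR x y).1 := contDiff_bracket_fst (n := 2) hx hy
  have hw₀ := (hw.differentiable two_ne_zero t).hasDerivAt
  have hw₁ := (hw.differentiable_deriv_two t).hasDerivAt
  refine (((hz t).hasDerivAt.mul hw₁).add (hw₀.const_mul (z.2.2 / 2))).congr_deriv ?_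
  rw [affineDeriv]
  ring

theorem periodic_cocyclePotential {T : ℝ} (hx : IsPeriodicTriple x T) (hy : IsPeriodicTriple y T)
    (hz : IsPeriodicTriple z T) : Function.Periodic (cocyclePotential x y z) T :=
  have hw := hx.bracket_fst hy
  (hz.periodic_snd.mul (periodic_deriv hw)).add (hw.smul (z.2.2 / 2))

theorem integral_period_kpairDensity_bracket_cyclic_sum_eq_zero {T : ℝ}
    (hx : IsRegularTriple x) (hy : IsRegularTriple y) (hz : IsRegularTriple z)
    (hxT : IsPeriodicTriple x T) (hyT : IsPeriodicTriple y T) (hzT : IsPeriodicTriple z T)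
    (a : ℝ) :
    ∫ t in a..a + T, (kpairDensity (asympBracketR x y) z t + kpairDensity (asympBracketR y z) x t
      + kpairDensity (asympBracketR z x) y t) = 0 := by
  have hperiodic : Function.Periodic
      (-(cocyclePotential x y z + cocyclePotential y z x + cocyclePotential z x y)) T :=
    (((periodic_cocyclePotential hxT hyT hzT).add (periodic_cocyclePotential hyT hzT hxT)).add
      (periodic_cocyclePotential hzT hxT hyT)).comp Neg.neg
  refine integral_period_eq_zero_of_hasDerivAt hperiodic (fun t => ?_) ?_ a
  · have hderiv {u v w : AsympTripleR} (hu : IsRegularTriple u) (hv : IsRegularTriple v)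
        (hw : IsRegularTriple w) :=
      hasDerivAt_cocyclePotential hu.contDiff_fst hv.contDiff_fst
        (hw.contDiff_snd.differentiable one_ne_zero) t
    rw [kpairDensity_bracket_cyclic_sum hx.contDiff_two_fst hy.contDiff_two_fst
      hz.contDiff_two_fst]
    exact (((hderiv hx hy hz).add (hderiv hy hz hx)).add (hderiv hz hx hy)).neg
  · exact ((continuous_kpairDensity_bracket hx hy hz).add
      (continuous_kpairDensity_bracket hy hz hx)).add (continuous_kpairDensity_bracket hz hx hy)

theorem stmt_9_general
    (hx : IsRegularTriple x) (hy : IsRegularTriple y) (hz : IsRegularTriple z)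
    (hxT : IsPeriodicTriple x (2 * Real.pi)) (hyT : IsPeriodicTriple y (2 * Real.pi))
    (hzT : IsPeriodicTriple z (2 * Real.pi)) :
    Kpair (asympBracketR x y) z + Kpair (asympBracketR y z) x
      + Kpair (asympBracketR z x) y = 0 := by
  have hxy := continuous_kpairDensity_bracket hx hy hz
  have hyz := continuous_kpairDensity_bracket hy hz hx
  have hzx := continuous_kpairDensity_bracket hz hx hy
  have hsum := integral_period_kpairDensity_bracket_cyclic_sum_eq_zero hx hy hz hxT hyT hzT 0
  rwa [zero_add, intervalIntegral.integral_add ((hxy.fun_add hyz).intervalIntegrable _ _)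
      (hzx.intervalIntegrable _ _),
    intervalIntegral.integral_add (hxy.intervalIntegrable _ _)
      (hyz.intervalIntegrable _ _)] at hsum

end Cocycle

/-- Cocycle (cyclic) identity for the surface-charge central extension. -/
theorem stmt_9 (x y z : AsympTripleR)
    (hx : IsAsympEltR x) (hy : IsAsympEltR y) (hz : IsAsympEltR z) :
    Kpair (asympBracketR x y) z + Kpair (asympBracketR y z) x
      + Kpair (asympBracketR z x) y = 0 := by
  exact stmt_9_general hx.isRegularTriple hy.isRegularTriple hz.isRegularTriple
    hx.isPeriodicTriple hy.isPeriodicTriple hz.isPeriodicTriple
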